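/- Let M(μ(u)) be the Verma module over the Yangian Y(sl_2) with highest vector 1_μ, where μ(u)·Q(u) = P(u) as formal Laurent series in u^{-1} for some monic polynomials P(u), Q(u) ∈ ℂ[u] of degree p. Then for any integer s ≥ p there exist constants c_0, ..., c_{s-1} ∈ ℂ such that the vector ζ = c_0 f^{(0)} 1_μ + ⋯ + c_{s-1} f^{(s-1)} 1_μ + f^{(s)} 1_μ satisfies e^{(r)} ζ = 0 for all r ≥ 0 (i.e. e(u) ζ = 0). -/

import Mathlib

/-!
On the highest vector, `e^{(r)} f^{(i)} 1_μ = h^{(r+i)} 1_μ = μ^{(r+i)} 1_μ`, so for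
`ζ = Σ q_i f^{(i)} 1_μ` the vector `e^{(r)} ζ` is `(Σ q_i μ^{(r+i)}) 1_μ`. The scalar is the
coefficient of `u^{-r-1}` in `μ(u) · Σ q_i u^i`. It vanishes whenever that product is a polynomial
(`sum_coeff_mul_eq_zero`). For `s ≥ p` take the `q_i` to be the coefficients of the monic
polynomial `u^{s-p} Q(u)` of degree `s`, since `μ(u) u^{s-p} Q(u) = u^{s-p} P(u)`.
-/

noncomputable section
open scoped BigOperators

/-- Commutator. -/
def br {A : Type*} [Ring A] (x y : A) : A := x * y - y * x

/-- Generators of the Yangian `Y(sl_2)` in Drinfeld's presentation. -/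
inductive SGen : Type
  | e : ℕ → SGen
  | h : ℕ → SGen
  | f : ℕ → SGen

/-- The free algebra on the generators `e^{(r)}, h^{(r)}, f^{(r)}`. -/
abbrev SFree : Type := FreeAlgebra ℂ SGen

def se (r : ℕ) : SFree := FreeAlgebra.ι ℂ (SGen.e r)
def sh (r : ℕ) : SFree := FreeAlgebra.ι ℂ (SGen.h r)
def sf (r : ℕ) : SFree := FreeAlgebra.ι ℂ (SGen.f r)

/-- The defining relations of `Y(sl_2)` (Drinfeld's presentation with `n = 1`,
`a_{11} = 2`, `d_1 = 1`). -/
inductive slRel : SFree → SFree → Prop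
  | hh (r s : ℕ) : slRel (br (sh r) (sh s)) 0
  | ef (r s : ℕ) : slRel (br (se r) (sf s)) (sh (r + s))
  | he0 (s : ℕ) : slRel (br (sh 0) (se s)) ((2 : ℂ) • se s)
  | hf0 (s : ℕ) : slRel (br (sh 0) (sf s)) (-((2 : ℂ) • sf s))
  | he (r s : ℕ) :
      slRel (br (sh (r + 1)) (se s) - br (sh r) (se (s + 1))) (sh r * se s + se s * sh r)
  | hf (r s : ℕ) :
      slRel (br (sh (r + 1)) (sf s) - br (sh r) (sf (s + 1))) (-(sh r * sf s + sf s * sh r))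
  | ee (r s : ℕ) :
      slRel (br (se (r + 1)) (se s) - br (se r) (se (s + 1))) (se r * se s + se s * se r)
  | ff (r s : ℕ) :
      slRel (br (sf (r + 1)) (sf s) - br (sf r) (sf (s + 1))) (-(sf r * sf s + sf s * sf r))

/-- The Yangian `Y(sl_2)`. -/
abbrev Ysl2 : Type := RingQuot slRel

/-- Canonical projection onto `Y(sl_2)`. -/
def smk : SFree →ₐ[ℂ] Ysl2 := RingQuot.mkAlgHom ℂ slRel

/-- The generators `e^{(r)}, h^{(r)}, f^{(r)}` of `Y(sl_2)`. -/
def Es (r : ℕ) : Ysl2 := smk (se r)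
def Hs (r : ℕ) : Ysl2 := smk (sh r)
def Fs (r : ℕ) : Ysl2 := smk (sf r)

/-- The left ideal defining the Verma module `M(μ(u))` over `Y(sl_2)`, where `μ r = μ^{(r)}`
are the coefficients of `μ(u) = 1 + Σ_{r≥0} μ^{(r)} u^{-r-1}`. -/
def slVermaIdeal (μ : ℕ → ℂ) : Submodule Ysl2 Ysl2 :=
  Submodule.span Ysl2
    ((Set.range fun r : ℕ => Es r) ∪
     (Set.range fun r : ℕ => Hs r - algebraMap ℂ Ysl2 (μ r)))

/-- The Verma module `M(μ(u))` over `Y(sl_2)`. -/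
abbrev SVerma (μ : ℕ → ℂ) := Ysl2 ⧸ slVermaIdeal μ

/-- The highest vector `1_μ`. -/
def oneMu (μ : ℕ → ℂ) : SVerma μ := Submodule.Quotient.mk 1

/-- The series `μ(u) = 1 + Σ_{r≥0} μ^{(r)} u^{-r-1}` as a power series in `t = u⁻¹`. -/
def muSeries (μ : ℕ → ℂ) : PowerSeries ℂ :=
  PowerSeries.mk fun k => if k = 0 then 1 else μ (k - 1)
/-- `u = t⁻¹` inside the field of formal Laurent series in `t = u⁻¹`. -/
noncomputable def uu : LaurentSeries ℂ := HahnSeries.single (-1 : ℤ) 1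

/-- A power series in `u⁻¹`, viewed as a formal Laurent series in `u⁻¹`. -/
noncomputable def lexp (ν : PowerSeries ℂ) : LaurentSeries ℂ := HahnSeries.ofPowerSeries ℤ ℂ ν

/-- `ν` is the Laurent expansion at `u = ∞` of a rational function in `u`:
there are nonzero polynomials `P(u)`, `Q(u)` with `ν(u)·Q(u) = P(u)` as formal
Laurent series in `u⁻¹`. -/
def IsRationalAtInf (ν : PowerSeries ℂ) : Prop :=
  ∃ P Q : Polynomial ℂ, P ≠ 0 ∧ Q ≠ 0 ∧
    lexp ν * Polynomial.aeval uu Q = Polynomial.aeval uu P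

/-- `ν` is the Laurent expansion at `u = ∞` of `P(u)/Q(u)` with `P`, `Q` monic of the
same degree. -/
def IsRationalAtInfMonic (ν : PowerSeries ℂ) : Prop :=
  ∃ P Q : Polynomial ℂ, P.Monic ∧ Q.Monic ∧ P.natDegree = Q.natDegree ∧
    lexp ν * Polynomial.aeval uu Q = Polynomial.aeval uu P

lemma uu_pow (n : ℕ) : uu ^ n = HahnSeries.single (-(n : ℤ)) (1 : ℂ) := by
  simp [uu, HahnSeries.single_pow]

lemma aeval_uu (P : Polynomial ℂ) :
    Polynomial.aeval uu P =
      ∑ i ∈ Finset.range (P.natDegree + 1), HahnSeries.single (-(i : ℤ)) (P.coeff i) := by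
  rw [Polynomial.aeval_eq_sum_range]
  refine Finset.sum_congr rfl fun i _ => ?_
  rw [uu_pow, Algebra.smul_def]
  -- Instance search equips `LaurentSeries ℂ` with the `ℂ`-algebra structure induced from power
  -- series, hence the primed lemma.
  rw [HahnSeries.algebraMap_apply']
  simp

/-- A polynomial in `u` has no terms of negative degree in `u`. -/
lemma coeff_aeval_uu (P : Polynomial ℂ) (r : ℕ) :
    (Polynomial.aeval uu P).coeff ((r : ℤ) + 1) = 0 := by
  rw [aeval_uu, HahnSeries.coeff_sum]
  refine Finset.sum_eq_zero fun i _ => HahnSeries.coeff_single_of_ne ?_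
  omega

lemma coeff_lexp_mul_single (μ : ℕ → ℂ) (i r : ℕ) (a : ℂ) :
    (lexp (muSeries μ) * HahnSeries.single (-(i : ℤ)) a).coeff ((r : ℤ) + 1) =
      a * μ (r + i) := by
  have h : ((r : ℤ) + 1) = ((r + i + 1 : ℕ) : ℤ) + (-(i : ℤ)) := by push_cast; ring
  rw [h, HahnSeries.coeff_mul_single_add, lexp, HahnSeries.ofPowerSeries_apply_coeff, mul_comm]
  simp [muSeries]

/-- If `μ(u) Q(u)` is a polynomial, then the coefficients of `Q` give a linear recurrence
satisfied by the `μ^{(r)}`. -/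
lemma sum_coeff_mul_eq_zero (μ : ℕ → ℂ) (P Q : Polynomial ℂ)
    (h : lexp (muSeries μ) * Polynomial.aeval uu Q = Polynomial.aeval uu P) (r : ℕ) :
    ∑ i ∈ Finset.range (Q.natDegree + 1), Q.coeff i * μ (r + i) = 0 := by
  rw [← coeff_aeval_uu P r, ← h, aeval_uu, Finset.mul_sum, HahnSeries.coeff_sum]
  exact Finset.sum_congr rfl fun i _ => (coeff_lexp_mul_single μ i r _).symm

lemma Es_mul_Fs (r i : ℕ) : Es r * Fs i = Fs i * Es r + Hs (r + i) := by
  have h := RingQuot.mkAlgHom_rel ℂ (slRel.ef r i)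
  simp only [br, map_sub, map_mul] at h
  exact sub_eq_iff_eq_add'.mp h

lemma Es_mul_Fs_smul (μ : ℕ → ℂ) (r i : ℕ) :
    (Es r * Fs i) • oneMu μ = algebraMap ℂ Ysl2 (μ (r + i)) • oneMu μ := by
  have hE : Es r • oneMu μ = 0 := by
    rw [oneMu, ← Submodule.Quotient.mk_smul, Submodule.Quotient.mk_eq_zero, smul_eq_mul, mul_one]
    exact Submodule.subset_span (Or.inl ⟨r, rfl⟩)
  have hH : (Hs (r + i) - algebraMap ℂ Ysl2 (μ (r + i))) • oneMu μ = 0 := by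
    rw [oneMu, ← Submodule.Quotient.mk_smul, Submodule.Quotient.mk_eq_zero, smul_eq_mul, mul_one]
    exact Submodule.subset_span (Or.inr ⟨r + i, rfl⟩)
  rw [Es_mul_Fs, add_smul, mul_smul, hE, smul_zero, zero_add]
  rwa [sub_smul, sub_eq_zero] at hH

/-- `e^{(r)}` sends `Σ q_i f^{(i)} 1_μ` to `(Σ q_i μ^{(r+i)}) 1_μ`. -/
lemma Es_smul_sum (μ q : ℕ → ℂ) (n r : ℕ) :
    Es r • ((∑ i ∈ Finset.range n, q i • Fs i) • oneMu μ) =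
      algebraMap ℂ Ysl2 (∑ i ∈ Finset.range n, q i * μ (r + i)) • oneMu μ := by
  rw [← mul_smul, Finset.mul_sum, Finset.sum_smul, map_sum, Finset.sum_smul]
  refine Finset.sum_congr rfl fun i _ => ?_
  rw [Algebra.smul_def, ← mul_assoc, ← Algebra.commutes, mul_assoc, mul_smul, Es_mul_Fs_smul,
    map_mul, mul_smul]

/-- **Corollary.** Let `M(μ(u))` be the Verma module over `Y(sl_2)` with
`μ(u) = P(u)/Q(u)` for monic polynomials `P`, `Q` of degree `p`.  Then for any `s ≥ p`
there are constants `c_0, …, c_{s-1}` such that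
`ζ = c_0 f^{(0)} 1_μ + ⋯ + c_{s-1} f^{(s-1)} 1_μ + f^{(s)} 1_μ` satisfies `e^{(r)} ζ = 0`
for all `r ≥ 0`. -/
theorem sl2_singular_vector (μ : ℕ → ℂ) (p : ℕ) (P Q : Polynomial ℂ)
    (hP : P.Monic) (hQ : Q.Monic) (hPdeg : P.natDegree = p) (hQdeg : Q.natDegree = p)
    (hrat : lexp (muSeries μ) * Polynomial.aeval uu Q = Polynomial.aeval uu P)
    (s : ℕ) (hs : p ≤ s) :
    ∃ c : Fin s → ℂ,
      ∀ r : ℕ, Es r • (((∑ i : Fin s, c i • Fs i) + Fs s) • oneMu μ) = 0 := by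
  have hmon : (Q * Polynomial.X ^ (s - p)).Monic := hQ.mul (Polynomial.monic_X_pow _)
  have hdeg : (Q * Polynomial.X ^ (s - p)).natDegree = s := by
    rw [hQ.natDegree_mul (Polynomial.monic_X_pow _), Polynomial.natDegree_X_pow, hQdeg]
    omega
  have hrat' : lexp (muSeries μ) * Polynomial.aeval uu (Q * Polynomial.X ^ (s - p)) =
      Polynomial.aeval uu (P * Polynomial.X ^ (s - p)) := by
    rw [map_mul, map_mul, ← mul_assoc, hrat]
  refine ⟨fun i => (Q * Polynomial.X ^ (s - p)).coeff i, fun r => ?_⟩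
  have hlead : (Q * Polynomial.X ^ (s - p)).coeff s = 1 := by
    simpa only [hdeg] using hmon.coeff_natDegree
  have hsum := Es_smul_sum μ (Q * Polynomial.X ^ (s - p)).coeff (s + 1) r
  have hzero := sum_coeff_mul_eq_zero μ _ _ hrat' r
  rw [hdeg] at hzero
  rwa [hzero, map_zero, zero_smul, Finset.sum_range_succ, hlead, one_smul,
    Finset.sum_range] at hsum
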